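/- Let d ≥ 1 and α > 0, and suppose 𝔼[z(0)] < ∞. For every ε ∈ (0, 𝔼[z(0)]) there exists c(ε) > 0 such that ℙ-almost surely, P₀(A(t) ≤ t(𝔼[z(0)] − ε)) ≤ exp(−t^{c(ε)}) for all sufficiently large t. -/

import Mathlib

open MeasureTheory ProbabilityTheory Filter Set

noncomputable section

/-- `n`-step transition probabilities of the discrete-time simple random walk on `ℤ^m`. -/
def srwKernel (m : ℕ) : ℕ → (Fin m → ℤ) → (Fin m → ℤ) → ℝ
  | 0, x, y => if x = y then 1 else 0
  | n + 1, x, y =>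
      (∑ i : Fin m, (srwKernel m n (Function.update x i (x i + 1)) y
        + srwKernel m n (Function.update x i (x i - 1)) y)) / (2 * m)

/-- Transition kernel of the continuous-time simple random walk on `ℤ^m` which jumps to
each of its `2m` nearest neighbours at rate `1` (total jump rate `2m`). -/
def heatKernel (m : ℕ) (t : ℝ) (x y : Fin m → ℤ) : ℝ :=
  ∑' n : ℕ, Real.exp (-(2 * m) * t) * ((2 * m) * t) ^ n / n.factorial * srwKernel m n x y

/-- `(P, S)` is (a realization of) the continuous-time simple random walk on `ℤ^m`:
under `P x` the process `S` starts at `x`, has right-continuous (piecewise constant)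
paths, and its finite-dimensional distributions are given by the heat kernel. -/
structure IsCTSRW (m : ℕ) {Ω : Type*} [MeasurableSpace Ω]
    (P : (Fin m → ℤ) → Measure Ω) (S : ℝ → Ω → (Fin m → ℤ)) : Prop where
  prob : ∀ x, IsProbabilityMeasure (P x)
  meas : Measurable fun p : ℝ × Ω => S p.1 p.2
  start : ∀ x, ∀ᵐ ω ∂ P x, S 0 ω = x
  rightCont : ∀ x, ∀ᵐ ω ∂ P x, ∀ t : ℝ, 0 ≤ t →
    ∃ ε > (0 : ℝ), ∀ u, t ≤ u → u < t + ε → S u ω = S t ω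
  fdd : ∀ x (n : ℕ) (t : Fin (n + 1) → ℝ), 0 ≤ t 0 →
    (∀ i : Fin n, t i.castSucc ≤ t i.succ) →
    ∀ y : Fin (n + 1) → (Fin m → ℤ),
      (P x {ω | ∀ i, S (t i) ω = y i}).toReal
        = heatKernel m (t 0) x (y 0)
          * ∏ i : Fin n, heatKernel m (t i.succ - t i.castSucc) (y i.castSucc) (y i.succ)

/-- `z` is an i.i.d. nonnegative random scenery on `ℤ^d` whose common upper tail decays
like `r^{-α+o(1)}`. -/
structure IsScenery (d : ℕ) (α : ℝ) {Ω : Type*} [MeasurableSpace Ω]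
    (μ : Measure Ω) (z : (Fin d → ℤ) → Ω → ℝ) : Prop where
  prob : IsProbabilityMeasure μ
  meas : ∀ x, Measurable (z x)
  nonneg : ∀ x ω, 0 ≤ z x ω
  indep : iIndepFun z μ
  ident : ∀ x, IdentDistrib (z x) (z 0) μ μ
  tail : Tendsto (fun r : ℝ => Real.log (μ {ω | r < z 0 ω}).toReal / Real.log r)
    atTop (nhds (-α))

/-- The random walk in random scenery `A(t) = ∫₀ᵗ z(S_u) du`. -/
def rwrs {Ωz Ωw : Type*} (d : ℕ) (z : (Fin d → ℤ) → Ωz → ℝ)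
    (S : ℝ → Ωw → (Fin d → ℤ)) (t : ℝ) (ζ : Ωz) (ω : Ωw) : ℝ :=
  ∫ u in Set.Ioc (0 : ℝ) t, z (S u ω) ζ

end

open MeasureTheory ProbabilityTheory Filter Set

/-!
Fix `b < 𝔼[z(0)]` and cut time into blocks of length `L = ⌈t ^ s⌉` with `s > 0` small. By Jensen's
inequality over the offset `v ∈ (0, L]`, the variable `exp (-(l / L) * ∫ u in 0..nL, z (S u))` is at
most the average over `v` of `∏ i < n, exp (-l * z (S (v + i * L)))`. By the Markov property the
expectation of this product is at most `ρ ^ (n - 1)`, up to the probability that the walk leaves a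
large box, where `ρ` bounds `∑ y, p_L(x, y) * exp (-l * z y)` for all `x` in the box.

These sums average independent variables in `[0, 1]` with weights `p_L(x, y) ≤ 1 / √L`, so by
Hoeffding's inequality and the Borel-Cantelli lemma they almost surely concentrate around
`𝔼[exp (-l * z 0)]`, which for small `l` is less than `exp (-l * b')` for a `b' > b`. Taking
`ρ = exp (-l * b')` in Markov's inequality, each of the roughly `t ^ (1 - s)` blocks contributes a
factor `exp (-l * (b' - b))`.
-/

/-! ### Poisson weights of path counts -/

lemma add_half_div_exp_pow_le_factorial_sq (k : ℕ) :
    ((k + 1 / 2) / Real.exp 1) ^ (2 * k + 1) ≤ (k.factorial : ℝ) ^ 2 := by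
  rcases k.eq_zero_or_pos with rfl | hk
  · have h : 1 / 2 / Real.exp 1 ≤ 1 :=
      div_le_one_of_le₀ (by linarith [Real.exp_one_gt_d9]) (Real.exp_pos 1).le
    simpa using h
  have hk0 : (0 : ℝ) < k := by exact_mod_cast hk
  have hbase : (k + 1 / 2 : ℝ) ≤ k * Real.exp (1 / (2 * k)) :=
    calc (k + 1 / 2 : ℝ) = k * (1 / (2 * k) + 1) := by field_simp; ring
      _ ≤ k * Real.exp (1 / (2 * k)) := by gcongr; exact Real.add_one_le_exp _
  have hpow : (k + 1 / 2 : ℝ) ^ (2 * k) ≤ k ^ (2 * k) * Real.exp 1 :=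
    calc (k + 1 / 2 : ℝ) ^ (2 * k) ≤ (k * Real.exp (1 / (2 * k))) ^ (2 * k) := by gcongr
      _ = k ^ (2 * k) * Real.exp 1 := by
        rw [mul_pow, ← Real.exp_nat_mul]
        congr 2
        push_cast
        field_simp
  calc ((k + 1 / 2) / Real.exp 1) ^ (2 * k + 1)
      = (k + 1 / 2 : ℝ) ^ (2 * k) * (k + 1 / 2) / Real.exp 1 ^ (2 * k + 1) := by
        rw [div_pow, pow_succ]
    _ ≤ k ^ (2 * k) * Real.exp 1 * (2 * Real.pi * k) / Real.exp 1 ^ (2 * k + 1) := by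
        have : (1 : ℝ) ≤ k := by exact_mod_cast hk
        gcongr
        nlinarith [Real.pi_gt_three]
    _ = (√(2 * Real.pi * k) * (k / Real.exp 1) ^ k) ^ 2 := by
        rw [mul_pow, Real.sq_sqrt (by positivity), div_pow, div_pow]
        field_simp
        ring
    _ ≤ (k.factorial : ℝ) ^ 2 := by gcongr; exact Stirling.le_factorial_stirling k

lemma sqrt_mul_pow_div_factorial_le_exp {t : ℝ} (ht : 0 ≤ t) (k : ℕ) :
    √t * (t ^ k / k.factorial) ≤ Real.exp t := by
  set a : ℝ := k + 1 / 2 with ha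
  have ha0 : 0 < a := by positivity
  have hta : t ≤ a / Real.exp 1 * Real.exp (t / a) :=
    calc t = a * (t / a - 1 + 1) := by field_simp; ring
      _ ≤ a * Real.exp (t / a - 1) := by gcongr; exact Real.add_one_le_exp _
      _ = a / Real.exp 1 * Real.exp (t / a) := by rw [Real.exp_sub]; ring
  have hsq : (√t * t ^ k) ^ 2 ≤ (Real.exp t * k.factorial) ^ 2 :=
    calc (√t * t ^ k) ^ 2 = t ^ (2 * k + 1) := by rw [mul_pow, Real.sq_sqrt ht]; ring
      _ ≤ (a / Real.exp 1 * Real.exp (t / a)) ^ (2 * k + 1) := by gcongr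
      _ = Real.exp t ^ 2 * (a / Real.exp 1) ^ (2 * k + 1) := by
        rw [mul_pow, ← Real.exp_nat_mul, ← Real.exp_nat_mul, mul_comm]
        congr 2
        push_cast
        rw [ha]
        field_simp
      _ ≤ Real.exp t ^ 2 * (k.factorial : ℝ) ^ 2 := by
        gcongr
        exact add_half_div_exp_pow_le_factorial_sq k
      _ = (Real.exp t * k.factorial) ^ 2 := by ring
  rw [← mul_div_assoc, div_le_iff₀ (by positivity)]
  exact (pow_le_pow_iff_left₀ (by positivity) (by positivity) two_ne_zero).1 hsq

section StepSum

variable {ι G : Type*} [AddCommGroup G] {v : ι → G} {s : Finset ι}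

/-- The element `∑ i ∈ s, X ^ v i` of the group algebra of `G`. The coefficient of its `n`-th power
at `w` is the number of `n`-step paths from `0` to `w` with steps `v i`, `i ∈ s`. -/
noncomputable def stepSum (v : ι → G) (s : Finset ι) : AddMonoidAlgebra ℝ G :=
  ∑ i ∈ s, AddMonoidAlgebra.single (v i) 1

lemma coeff_stepSum_mul (f : AddMonoidAlgebra ℝ G) (w : G) :
    (stepSum v s * f).coeff w = ∑ i ∈ s, f.coeff (w - v i) := by
  simp [stepSum, Finset.sum_mul, Finsupp.finsetSum_apply, neg_add_eq_sub]

lemma coeff_stepSum_pow_nonneg (n : ℕ) (w : G) : 0 ≤ (stepSum v s ^ n).coeff w := by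
  classical
  induction n generalizing w with
  | zero =>
    rw [pow_zero, AddMonoidAlgebra.one_def, AddMonoidAlgebra.coeff_single, Finsupp.single_apply]
    positivity
  | succ n ih =>
    rw [pow_succ', coeff_stepSum_mul]
    exact Finset.sum_nonneg fun i _ => ih _

lemma sum_coeff_stepSum_pow_le (n : ℕ) (F : Finset G) :
    ∑ w ∈ F, (stepSum v s ^ n).coeff w ≤ (s.card : ℝ) ^ n := by
  classical
  induction n generalizing F with
  | zero =>
    simp only [pow_zero, AddMonoidAlgebra.one_def, AddMonoidAlgebra.coeff_single,
      Finsupp.single_apply, Finset.sum_ite_eq]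
    split_ifs <;> norm_num
  | succ n ih =>
    simp only [pow_succ' _ n, coeff_stepSum_mul]
    rw [Finset.sum_comm, ← nsmul_eq_mul]
    refine Finset.sum_le_card_nsmul _ _ _ fun i _ => ?_
    simpa [← sub_eq_add_neg] using ih (F.map (addRightEmbedding (-v i)))

lemma coeff_stepSum_insert_pow [DecidableEq ι] {i : ι} (hi : i ∉ s) (n : ℕ) (w : G) :
    (stepSum v (insert i s) ^ n).coeff w =
      ∑ j ∈ Finset.range (n + 1), n.choose j * (stepSum v s ^ (n - j)).coeff (w - j • v i) := by
  have hinsert : stepSum v (insert i s) = AddMonoidAlgebra.single (v i) 1 + stepSum v s :=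
    Finset.sum_insert hi
  rw [hinsert, add_pow]
  simp only [AddMonoidAlgebra.single_pow, one_pow, AddMonoidAlgebra.coeff_sum,
    Finsupp.finsetSum_apply]
  refine Finset.sum_congr rfl fun j _ => ?_
  rw [mul_comm, ← nsmul_eq_mul, AddMonoidAlgebra.coeff_smul]
  simp [neg_add_eq_sub]

lemma pow_div_factorial_mul_coeff_stepSum_insert_pow [DecidableEq ι] {i : ι} (hi : i ∉ s) (t : ℝ)
    (n : ℕ) (w : G) :
    t ^ n / n.factorial * (stepSum v (insert i s) ^ n).coeff w =
      ∑ j ∈ Finset.range (n + 1), t ^ j / j.factorial *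
        (t ^ (n - j) / (n - j).factorial * (stepSum v s ^ (n - j)).coeff (w - j • v i)) := by
  rw [coeff_stepSum_insert_pow hi, Finset.mul_sum]
  refine Finset.sum_congr rfl fun j hj => ?_
  have hjn : j ≤ n := Finset.mem_range_succ_iff.1 hj
  rw [Nat.cast_choose ℝ hjn, ← pow_mul_pow_sub t hjn]
  field_simp

lemma sum_sum_pow_div_factorial_mul_coeff_stepSum_pow_le {g : G}
    (hg : Function.Injective fun j : ℕ => j • g) {t : ℝ} (ht : 0 ≤ t) (M : ℕ) (w : G) :
    ∑ j ∈ Finset.range M, ∑ k ∈ Finset.range M,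
        t ^ k / k.factorial * (stepSum v s ^ k).coeff (w - j • g) ≤ Real.exp (s.card * t) := by
  have hmass (k : ℕ) : ∑ j ∈ Finset.range M, (stepSum v s ^ k).coeff (w - j • g) ≤
      (s.card : ℝ) ^ k := by
    have := sum_coeff_stepSum_pow_le (v := v) (s := s) k
      ((Finset.range M).map ⟨_, (sub_right_injective (b := w)).comp hg⟩)
    rwa [Finset.sum_map] at this
  rw [Finset.sum_comm]
  calc ∑ k ∈ Finset.range M, ∑ j ∈ Finset.range M,
        t ^ k / k.factorial * (stepSum v s ^ k).coeff (w - j • g)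
      = ∑ k ∈ Finset.range M, t ^ k / k.factorial *
          ∑ j ∈ Finset.range M, (stepSum v s ^ k).coeff (w - j • g) := by
        simp only [Finset.mul_sum]
    _ ≤ ∑ k ∈ Finset.range M, t ^ k / k.factorial * (s.card : ℝ) ^ k := by
        gcongr with k
        exact hmass k
    _ = ∑ k ∈ Finset.range M, (s.card * t) ^ k / k.factorial :=
        Finset.sum_congr rfl fun k _ => by ring
    _ ≤ Real.exp (s.card * t) := Real.sum_le_exp_of_nonneg (by positivity) M

-- The steps in direction `i` of the Poissonized walk are independent of the others, and their
-- number is a Poisson variable, all of whose atoms have mass at most `1 / √t`.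
lemma sqrt_mul_sum_coeff_stepSum_pow_le {i : ι} (hi : i ∈ s)
    (hinj : Function.Injective fun j : ℕ => j • v i) {t : ℝ} (ht : 0 ≤ t) (M : ℕ) (w : G) :
    √t * ∑ n ∈ Finset.range M, t ^ n / n.factorial * (stepSum v s ^ n).coeff w ≤
      Real.exp (s.card * t) := by
  classical
  obtain ⟨s, his, rfl⟩ : ∃ s', i ∉ s' ∧ insert i s' = s :=
    ⟨s.erase i, Finset.notMem_erase i s, Finset.insert_erase hi⟩
  set f : ℕ → ℕ → ℝ := fun j k =>
    t ^ j / j.factorial * (t ^ k / k.factorial * (stepSum v s ^ k).coeff (w - j • v i)) with hf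
  have hf0 (j k : ℕ) : 0 ≤ t ^ k / k.factorial * (stepSum v s ^ k).coeff (w - j • v i) :=
    mul_nonneg (by positivity) (coeff_stepSum_pow_nonneg _ _)
  calc √t * ∑ n ∈ Finset.range M, t ^ n / n.factorial * (stepSum v (insert i s) ^ n).coeff w
      = √t * ∑ j ∈ Finset.range M, ∑ k ∈ Finset.range (M - j), f j k := by
        simp only [pow_div_factorial_mul_coeff_stepSum_insert_pow his]
        exact congrArg _ (Finset.sum_range_diag_flip M f)
    _ ≤ √t * ∑ j ∈ Finset.range M, ∑ k ∈ Finset.range M, f j k := by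
        gcongr with j
        · exact fun k _ _ => mul_nonneg (by positivity) (hf0 j k)
        · exact Nat.sub_le M j
    _ = ∑ j ∈ Finset.range M, ∑ k ∈ Finset.range M, √t * (t ^ j / j.factorial) *
          (t ^ k / k.factorial * (stepSum v s ^ k).coeff (w - j • v i)) := by
        simp only [hf, Finset.mul_sum, mul_assoc]
    _ ≤ ∑ j ∈ Finset.range M, ∑ k ∈ Finset.range M, Real.exp t *
          (t ^ k / k.factorial * (stepSum v s ^ k).coeff (w - j • v i)) := by
        gcongr with j _ k
        · exact hf0 j k
        · exact sqrt_mul_pow_div_factorial_le_exp ht j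
    _ = Real.exp t * ∑ j ∈ Finset.range M, ∑ k ∈ Finset.range M,
          t ^ k / k.factorial * (stepSum v s ^ k).coeff (w - j • v i) := by
        simp only [Finset.mul_sum]
    _ ≤ Real.exp t * Real.exp (s.card * t) := by
        gcongr
        exact sum_sum_pow_div_factorial_mul_coeff_stepSum_pow_le hinj ht M w
    _ = Real.exp ((insert i s).card * t) := by
        rw [← Real.exp_add, Finset.card_insert_of_notMem his]
        push_cast
        ring_nf

end StepSum

/-! ### Transition probabilities -/

section Srw

variable {m : ℕ}

/-- The `2m` unit steps `± e_i` of the simple random walk on `ℤ^m`. -/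
def latticeStep (p : Fin m × ℤˣ) : Fin m → ℤ := Pi.single p.1 (p.2 : ℤ)

lemma norm_latticeStep (p : Fin m × ℤˣ) : ‖latticeStep p‖ = 1 := by
  rw [latticeStep, Pi.norm_single]
  rcases Int.units_eq_one_or p.2 with h | h <;> simp [h]

lemma card_latticeStep : ((Finset.univ : Finset (Fin m × ℤˣ)).card : ℝ) = 2 * m := by
  simp [mul_comm]

lemma srwKernel_succ (n : ℕ) (x y : Fin m → ℤ) :
    srwKernel m (n + 1) x y = (∑ p, srwKernel m n (x + latticeStep p) y) / (2 * m) := by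
  have hadd (i : Fin m) (a : ℤ) : Function.update x i (x i + a) = x + Pi.single i a := by
    ext j
    rcases eq_or_ne j i with rfl | hj <;> simp [*]
  simp [srwKernel, sub_eq_add_neg, hadd, Fintype.sum_prod_type, latticeStep, UnitsInt.univ]

lemma srwKernel_nonneg (n : ℕ) (x y : Fin m → ℤ) : 0 ≤ srwKernel m n x y := by
  induction n generalizing x with
  | zero => rw [srwKernel]; positivity
  | succ n ih =>
    rw [srwKernel_succ]
    exact div_nonneg (Finset.sum_nonneg fun p _ => ih _) (by positivity)

lemma pow_mul_srwKernel (hm : 0 < m) (n : ℕ) (x y : Fin m → ℤ) :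
    (2 * m : ℝ) ^ n * srwKernel m n x y =
      (stepSum latticeStep Finset.univ ^ n).coeff (y - x) := by
  induction n generalizing x with
  | zero =>
    simp [srwKernel, AddMonoidAlgebra.one_def, Finsupp.single_apply, eq_comm, sub_eq_zero]
  | succ n ih =>
    rw [pow_succ' (stepSum _ _), coeff_stepSum_mul, srwKernel_succ, pow_succ]
    simp only [sub_sub, ← ih, ← Finset.mul_sum]
    field_simp

lemma sum_srwKernel_mul_exp_le {θ : ℝ} (hθ : 0 ≤ θ) (n : ℕ) (x : Fin m → ℤ)
    (F : Finset (Fin m → ℤ)) :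
    ∑ y ∈ F, srwKernel m n x y * Real.exp (θ * dist x y) ≤ Real.exp (θ * n) := by
  induction n generalizing x with
  | zero =>
    simp only [srwKernel, ite_mul, one_mul, zero_mul, Finset.sum_ite_eq]
    split_ifs <;> simp
  | succ n ih =>
    have hstep (p : Fin m × ℤˣ) (y : Fin m → ℤ) : dist x y ≤ 1 + dist (x + latticeStep p) y :=
      calc dist x y ≤ dist x (x + latticeStep p) + dist (x + latticeStep p) y := dist_triangle _ _ _
        _ = 1 + dist (x + latticeStep p) y := by rw [dist_self_add_right, norm_latticeStep]
    have hterm (p : Fin m × ℤˣ) (y : Fin m → ℤ) :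
        srwKernel m n (x + latticeStep p) y * Real.exp (θ * dist x y) ≤
          Real.exp θ * (srwKernel m n (x + latticeStep p) y *
            Real.exp (θ * dist (x + latticeStep p) y)) := by
      rw [mul_left_comm, ← Real.exp_add]
      refine mul_le_mul_of_nonneg_left (Real.exp_le_exp.2 ?_) (srwKernel_nonneg _ _ _)
      nlinarith [hstep p y]
    calc ∑ y ∈ F, srwKernel m (n + 1) x y * Real.exp (θ * dist x y)
        = (∑ p, ∑ y ∈ F, srwKernel m n (x + latticeStep p) y * Real.exp (θ * dist x y)) /
            (2 * m) := by
          rw [Finset.sum_comm, Finset.sum_div]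
          simp only [srwKernel_succ, Finset.sum_mul, div_mul_eq_mul_div]
      _ ≤ (∑ _p : Fin m × ℤˣ, Real.exp θ * Real.exp (θ * n)) / (2 * m) := by
          gcongr
          grw [Finset.sum_le_sum fun y _ => hterm p y, ← Finset.mul_sum, ih]
      _ ≤ Real.exp (θ * (n + 1 : ℕ)) := by
          rw [Finset.sum_const, nsmul_eq_mul, card_latticeStep, ← Real.exp_add, mul_div_right_comm]
          push_cast
          rw [mul_add_one, add_comm θ]
          exact mul_le_of_le_one_left (Real.exp_pos _).le (div_self_le_one _)

end Srw

section Heat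

variable {m : ℕ} {t : ℝ}

lemma srwKernel_le_one (n : ℕ) (x y : Fin m → ℤ) : srwKernel m n x y ≤ 1 := by
  simpa using sum_srwKernel_mul_exp_le le_rfl n x {y}

lemma heatKernel_term_nonneg (ht : 0 ≤ t) (x y : Fin m → ℤ) (n : ℕ) :
    0 ≤ Real.exp (-(2 * m) * t) * ((2 * m) * t) ^ n / n.factorial * srwKernel m n x y :=
  mul_nonneg (by positivity) (srwKernel_nonneg n x y)

lemma heatKernel_nonneg (ht : 0 ≤ t) (x y : Fin m → ℤ) : 0 ≤ heatKernel m t x y :=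
  tsum_nonneg (heatKernel_term_nonneg ht x y)

lemma summable_heatKernel (ht : 0 ≤ t) (x y : Fin m → ℤ) :
    Summable fun n : ℕ =>
      Real.exp (-(2 * m) * t) * ((2 * m) * t) ^ n / n.factorial * srwKernel m n x y := by
  refine Summable.of_nonneg_of_le (heatKernel_term_nonneg ht x y)
    (fun n => mul_le_of_le_one_right (by positivity) (srwKernel_le_one n x y)) ?_
  simp only [mul_div_assoc]
  exact (Real.summable_pow_div_factorial _).mul_left _

lemma sqrt_mul_heatKernel_le_one (hm : 0 < m) (ht : 0 ≤ t) (x y : Fin m → ℤ) :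
    √t * heatKernel m t x y ≤ 1 := by
  let i : Fin m × ℤˣ := (⟨0, hm⟩, 1)
  have hinj : Function.Injective fun j : ℕ => j • latticeStep i := fun j k h => by
    simpa [latticeStep, i] using congrFun h i.1
  rw [heatKernel, ← tsum_mul_left]
  refine Real.tsum_le_of_sum_range_le
    (fun n => mul_nonneg (by positivity) (heatKernel_term_nonneg ht x y n)) fun M => ?_
  calc ∑ n ∈ Finset.range M, √t *
        (Real.exp (-(2 * m) * t) * ((2 * m) * t) ^ n / n.factorial * srwKernel m n x y)
      = Real.exp (-(2 * m) * t) * (√t * ∑ n ∈ Finset.range M,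
          t ^ n / n.factorial * (stepSum latticeStep Finset.univ ^ n).coeff (y - x)) := by
        simp only [← pow_mul_srwKernel hm, Finset.mul_sum, mul_pow]
        refine Finset.sum_congr rfl fun n _ => ?_
        ring
    _ ≤ Real.exp (-(2 * m) * t) * Real.exp (2 * m * t) := by
        gcongr
        have := sqrt_mul_sum_coeff_stepSum_pow_le (Finset.mem_univ i) hinj ht M (y - x)
        rwa [card_latticeStep] at this
    _ = 1 := by rw [← Real.exp_add]; simp

lemma sum_heatKernel_mul_exp_le (ht : 0 ≤ t) {θ : ℝ} (hθ : 0 ≤ θ) (x : Fin m → ℤ)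
    (F : Finset (Fin m → ℤ)) :
    ∑ y ∈ F, heatKernel m t x y * Real.exp (θ * dist x y) ≤
      Real.exp (2 * m * t * (Real.exp θ - 1)) := by
  have hF : HasSum (fun n : ℕ => Real.exp (-(2 * m) * t) * ((2 * m) * t) ^ n / n.factorial *
      ∑ y ∈ F, srwKernel m n x y * Real.exp (θ * dist x y))
      (∑ y ∈ F, heatKernel m t x y * Real.exp (θ * dist x y)) := by
    simp only [Finset.mul_sum, ← mul_assoc]
    exact hasSum_sum fun y _ => (summable_heatKernel ht x y).hasSum.mul_right _
  have hexp : HasSum (fun n : ℕ => (2 * m * t * Real.exp θ) ^ n / n.factorial)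
      (Real.exp (2 * m * t * Real.exp θ)) := by
    rw [Real.exp_eq_exp_ℝ]
    exact NormedSpace.expSeries_div_hasSum_exp _
  have hle := hasSum_le (fun n => ?_) hF (hexp.mul_left (Real.exp (-(2 * m) * t)))
  · rw [← Real.exp_add] at hle
    exact hle.trans_eq (by ring_nf)
  · calc Real.exp (-(2 * m) * t) * ((2 * m) * t) ^ n / n.factorial *
          ∑ y ∈ F, srwKernel m n x y * Real.exp (θ * dist x y)
        ≤ Real.exp (-(2 * m) * t) * ((2 * m) * t) ^ n / n.factorial * Real.exp (θ * n) := by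
          gcongr
          exact sum_srwKernel_mul_exp_le hθ n x F
      _ = Real.exp (-(2 * m) * t) * ((2 * m * t * Real.exp θ) ^ n / n.factorial) := by
          rw [mul_pow (2 * m * t), ← Real.exp_nat_mul, mul_comm θ]
          ring

lemma sum_heatKernel_le_one (ht : 0 ≤ t) (x : Fin m → ℤ) (F : Finset (Fin m → ℤ)) :
    ∑ y ∈ F, heatKernel m t x y ≤ 1 := by
  simpa using sum_heatKernel_mul_exp_le ht le_rfl x F

end Heat

/-! ### The walk sampled at equally spaced times -/

section LatticeBox

variable {m : ℕ}

/-- The cube of side length `2R + 1` centred at `x`, i.e. the closed ball of radius `R` for the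
supremum distance on `ℤ^m`. -/
noncomputable def latticeBox (x : Fin m → ℤ) (R : ℕ) : Finset (Fin m → ℤ) :=
  Finset.Icc (x - (R : Fin m → ℤ)) (x + (R : Fin m → ℤ))

lemma mem_latticeBox {x y : Fin m → ℤ} {R : ℕ} : y ∈ latticeBox x R ↔ dist x y ≤ R := by
  simp only [latticeBox, Finset.mem_Icc, Pi.le_def, ← forall_and, dist_pi_le_iff R.cast_nonneg,
    Int.dist_eq, abs_le, Pi.sub_apply, Pi.add_apply, Pi.natCast_apply]
  refine forall_congr' fun i => ?_
  norm_cast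
  lia

lemma card_latticeBox (x : Fin m → ℤ) (R : ℕ) : (latticeBox x R).card = (2 * R + 1) ^ m := by
  have hside (i : Fin m) : (Finset.Icc ((x - (R : Fin m → ℤ)) i) ((x + (R : Fin m → ℤ)) i)).card =
      2 * R + 1 := by
    simp only [Int.card_Icc, Pi.sub_apply, Pi.add_apply, Pi.natCast_apply]
    lia
  rw [latticeBox, Pi.card_Icc, Finset.prod_congr rfl fun i _ => hside i]
  simp

end LatticeBox

lemma sum_path_prod_le {ι : Type*} [Fintype ι] {k : ι → ι → ℝ} (hk : ∀ i j, 0 ≤ k i j) {ρ : ℝ}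
    (hρ : 0 ≤ ρ) (hkρ : ∀ i, ∑ j, k i j ≤ ρ) {a : ι → ℝ} (ha : ∀ i, 0 ≤ a i) (n : ℕ) :
    ∑ y : Fin (n + 1) → ι, a (y 0) * ∏ i : Fin n, k (y i.castSucc) (y i.succ) ≤
      (∑ i, a i) * ρ ^ n := by
  induction n with
  | zero => simp [← (Equiv.funUnique (Fin 1) ι).sum_comp]
  | succ n ih =>
    calc ∑ y : Fin (n + 2) → ι, a (y 0) * ∏ i : Fin (n + 1), k (y i.castSucc) (y i.succ)
        = ∑ y : Fin (n + 1) → ι, (a (y 0) * ∏ i : Fin n, k (y i.castSucc) (y i.succ)) *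
            ∑ j, k (y (Fin.last n)) j := by
          rw [← (Fin.snocEquiv fun _ => ι).sum_comp, Fintype.sum_prod_type_right]
          simp [Fin.snocEquiv, Fin.prod_univ_castSucc, Finset.mul_sum, mul_assoc,
            ← Fin.castSucc_succ, -Fin.castSucc_zero]
      _ ≤ ∑ y : Fin (n + 1) → ι, (a (y 0) * ∏ i : Fin n, k (y i.castSucc) (y i.succ)) * ρ := by
          gcongr with y
          · exact mul_nonneg (ha _) (Finset.prod_nonneg fun i _ => hk _ _)
          · exact hkρ _
      _ ≤ (∑ i, a i) * ρ ^ (n + 1) := by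
          rw [← Finset.sum_mul, pow_succ, ← mul_assoc]
          gcongr

namespace IsCTSRW

variable {m : ℕ} {Ω : Type*} [MeasurableSpace Ω] {P : (Fin m → ℤ) → Measure Ω}
  {S : ℝ → Ω → Fin m → ℤ}

lemma measurable_apply (hS : IsCTSRW m P S) (t : ℝ) : Measurable (S t) :=
  hS.meas.comp measurable_prodMk_left

lemma measure_eq (hS : IsCTSRW m P S) {t : ℝ} (ht : 0 ≤ t) (x y : Fin m → ℤ) :
    P x {ω | S t ω = y} = ENNReal.ofReal (heatKernel m t x y) := by
  have := hS.prob x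
  have h := hS.fdd x 0 (fun _ => t) ht (by simp) fun _ => y
  rw [← ENNReal.ofReal_toReal (measure_ne_top (P x) {ω | S t ω = y})]
  simpa using congrArg ENNReal.ofReal h

lemma measure_notMem_latticeBox_le (hS : IsCTSRW m P S) {t : ℝ} (ht : 0 ≤ t) (x : Fin m → ℤ)
    (R : ℕ) : P x {ω | S t ω ∉ latticeBox x R} ≤ ENNReal.ofReal (Real.exp (4 * m * t - R)) := by
  have hunion : {ω | S t ω ∉ latticeBox x R} =
      ⋃ y : {y // y ∉ latticeBox x R}, {ω | S t ω = y} := by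
    ext ω
    simp
  have hfar (y : {y // y ∉ latticeBox x R}) : 1 ≤ Real.exp (-R) * Real.exp (1 * dist x y) := by
    rw [← Real.exp_add, Real.one_le_exp_iff]
    linarith [not_le.1 (mem_latticeBox.not.1 y.2)]
  have hsum (F : Finset {y // y ∉ latticeBox x R}) :
      ∑ y ∈ F, heatKernel m t x y ≤ Real.exp (4 * m * t - R) :=
    calc ∑ y ∈ F, heatKernel m t x y
        ≤ ∑ y ∈ F, heatKernel m t x y * (Real.exp (-R) * Real.exp (1 * dist x y)) :=
          Finset.sum_le_sum fun y _ => le_mul_of_one_le_right (heatKernel_nonneg ht x y) (hfar y)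
      _ = Real.exp (-R) * ∑ y ∈ F.map (Function.Embedding.subtype _),
            heatKernel m t x y * Real.exp (1 * dist x y) := by
          simp only [Finset.sum_map, Finset.mul_sum, Function.Embedding.subtype_apply,
            mul_left_comm]
      _ ≤ Real.exp (-R) * Real.exp (2 * m * t * (Real.exp 1 - 1)) := by
          gcongr
          exact sum_heatKernel_mul_exp_le ht zero_le_one x _
      _ ≤ Real.exp (4 * m * t - R) := by
          rw [← Real.exp_add, Real.exp_le_exp]
          nlinarith [Real.exp_one_lt_d9, mul_nonneg m.cast_nonneg ht]
  calc P x {ω | S t ω ∉ latticeBox x R}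
      ≤ ∑' y : {y // y ∉ latticeBox x R}, P x {ω | S t ω = y} := by
        rw [hunion]
        exact measure_iUnion_le _
    _ ≤ ENNReal.ofReal (Real.exp (4 * m * t - R)) := by
        refine ENNReal.summable.tsum_le_of_sum_le fun F => ?_
        rw [Finset.sum_congr rfl fun y _ => hS.measure_eq ht x y.1,
          ← ENNReal.ofReal_sum_of_nonneg fun y _ => heatKernel_nonneg ht x y.1]
        exact ENNReal.ofReal_le_ofReal (hsum F)

lemma measure_forall_eq (hS : IsCTSRW m P S) {v L : ℝ} (hv : 0 ≤ v) (hL : 0 ≤ L) (x : Fin m → ℤ)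
    {n : ℕ} (y : Fin (n + 1) → Fin m → ℤ) :
    P x {ω | ∀ i : Fin (n + 1), S (v + i * L) ω = y i} = ENNReal.ofReal
      (heatKernel m v x (y 0) * ∏ i : Fin n, heatKernel m L (y i.castSucc) (y i.succ)) := by
  have := hS.prob x
  have hgap (i : Fin n) : v + (i.succ : ℕ) * L - (v + (i.castSucc : ℕ) * L) = L := by
    push_cast [Fin.val_succ, Fin.val_castSucc]
    ring
  have h := hS.fdd x n (fun i => v + i * L) (by simpa)
    (fun i => by linarith [hgap i]) y
  simp only [hgap] at h
  rw [← ENNReal.ofReal_toReal (measure_ne_top (P x) _), h]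
  simp

lemma setLIntegral_prod_eq (hS : IsCTSRW m P S) {v L : ℝ} (hv : 0 ≤ v) (hL : 0 ≤ L)
    (x : Fin m → ℤ) {w : (Fin m → ℤ) → ℝ} (hw : ∀ y, 0 ≤ w y) {n : ℕ}
    (y : Fin (n + 1) → Fin m → ℤ) :
    ∫⁻ ω in {ω | ∀ i : Fin (n + 1), S (v + i * L) ω = y i},
      ENNReal.ofReal (∏ i : Fin (n + 1), w (S (v + i * L) ω)) ∂P x =
        ENNReal.ofReal (heatKernel m v x (y 0) * w (y 0) *
          ∏ i : Fin n, heatKernel m L (y i.castSucc) (y i.succ) * w (y i.succ)) := by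
  have hmeas : MeasurableSet {ω | ∀ i : Fin (n + 1), S (v + i * L) ω = y i} := by
    rw [Set.ofPred_forall]
    exact MeasurableSet.iInter fun i => hS.measurable_apply _ (measurableSet_singleton (y i))
  rw [setLIntegral_congr_fun (g := fun _ => ENNReal.ofReal (∏ i, w (y i))) hmeas
    fun ω hω => by simp only [hω _], setLIntegral_const, hS.measure_forall_eq hv hL,
    ← ENNReal.ofReal_mul (Finset.prod_nonneg fun i _ => hw _), Fin.prod_univ_succ,
    Finset.prod_mul_distrib]
  ring_nf

lemma setLIntegral_prod_le_pow (hS : IsCTSRW m P S) {v L : ℝ} (hv : 0 ≤ v) (hL : 0 ≤ L)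
    (x : Fin m → ℤ) {B : Finset (Fin m → ℤ)} {w : (Fin m → ℤ) → ℝ} (hw₀ : ∀ y, 0 ≤ w y)
    (hw₁ : ∀ y, w y ≤ 1) {ρ : ℝ} (hρ : 0 ≤ ρ)
    (hB : ∀ y ∈ B, ∑ y' ∈ B, heatKernel m L y y' * w y' ≤ ρ) (n : ℕ) :
    ∫⁻ ω in {ω | ∀ i : Fin (n + 1), S (v + i * L) ω ∈ B},
      ENNReal.ofReal (∏ i : Fin (n + 1), w (S (v + i * L) ω)) ∂P x ≤ ENNReal.ofReal (ρ ^ n) := by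
  set a : B → ℝ := fun y => heatKernel m v x y * w y
  set k : B → B → ℝ := fun y y' => heatKernel m L y y' * w y'
  have ha (y : B) : 0 ≤ a y := mul_nonneg (heatKernel_nonneg hv _ _) (hw₀ _)
  have hk (y y' : B) : 0 ≤ k y y' := mul_nonneg (heatKernel_nonneg hL _ _) (hw₀ _)
  have hkρ (y : B) : ∑ y', k y y' ≤ ρ := by
    simpa only [k, Finset.sum_coe_sort B fun y' => heatKernel m L y y' * w y'] using hB y y.2
  have ha_sum : ∑ y, a y ≤ 1 :=
    calc ∑ y, a y ≤ ∑ y : B, heatKernel m v x y := Finset.sum_le_sum fun y _ =>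
          mul_le_of_le_one_right (heatKernel_nonneg hv x y) (hw₁ y)
      _ = ∑ y ∈ B, heatKernel m v x y := Finset.sum_coe_sort B _
      _ ≤ 1 := sum_heatKernel_le_one hv x B
  have hunion : {ω | ∀ i : Fin (n + 1), S (v + i * L) ω ∈ B} =
      ⋃ y : Fin (n + 1) → B, {ω | ∀ i : Fin (n + 1), S (v + i * L) ω = y i} := by
    ext ω
    simp only [mem_iUnion]
    exact ⟨fun h => ⟨fun i => ⟨_, h i⟩, fun i => rfl⟩, fun ⟨y, hy⟩ i => hy i ▸ (y i).2⟩
  rw [hunion]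
  refine (lintegral_iUnion_le _ _).trans ?_
  simp only [hS.setLIntegral_prod_eq hv hL x hw₀, tsum_fintype]
  rw [← ENNReal.ofReal_sum_of_nonneg fun y _ =>
    mul_nonneg (ha _) (Finset.prod_nonneg fun i _ => hk _ _)]
  refine ENNReal.ofReal_le_ofReal ((sum_path_prod_le hk hρ hkρ ha n).trans ?_)
  exact mul_le_of_le_one_left (by positivity) ha_sum

lemma lintegral_prod_le (hS : IsCTSRW m P S) {v L : ℝ} (hv : 0 ≤ v) (hL : 0 ≤ L) {n : ℕ} {T : ℝ}
    (hT : v + n * L ≤ T) (x : Fin m → ℤ) {w : (Fin m → ℤ) → ℝ} (hw₀ : ∀ y, 0 ≤ w y)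
    (hw₁ : ∀ y, w y ≤ 1) {R : ℕ} {ρ : ℝ} (hρ : 0 ≤ ρ)
    (hR : ∀ y ∈ latticeBox x R, ∑ y' ∈ latticeBox x R, heatKernel m L y y' * w y' ≤ ρ) :
    ∫⁻ ω, ENNReal.ofReal (∏ i : Fin (n + 1), w (S (v + i * L) ω)) ∂P x ≤
      ENNReal.ofReal (ρ ^ n + (n + 1) * Real.exp (4 * m * T - R)) := by
  set A : Set Ω := {ω | ∀ i : Fin (n + 1), S (v + i * L) ω ∈ latticeBox x R} with hA
  have hmeas : MeasurableSet A := by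
    rw [hA, Set.ofPred_forall]
    exact MeasurableSet.iInter fun i => hS.measurable_apply _ (Finset.measurableSet _)
  have hexit (i : Fin (n + 1)) : P x {ω | S (v + i * L) ω ∉ latticeBox x R} ≤
      ENNReal.ofReal (Real.exp (4 * m * T - R)) := by
    have hi : (i : ℝ) ≤ n := by exact_mod_cast Fin.is_le i
    refine (hS.measure_notMem_latticeBox_le (by positivity) x R).trans ?_
    gcongr
    nlinarith
  have hcompl : P x Aᶜ ≤ ENNReal.ofReal ((n + 1) * Real.exp (4 * m * T - R)) :=
    calc P x Aᶜ = P x (⋃ i : Fin (n + 1), {ω | S (v + i * L) ω ∉ latticeBox x R}) := by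
          congr 1
          ext ω
          simp [A]
      _ ≤ ∑ i : Fin (n + 1), ENNReal.ofReal (Real.exp (4 * m * T - R)) :=
          (measure_iUnion_fintype_le _ _).trans (Finset.sum_le_sum fun i _ => hexit i)
      _ = ENNReal.ofReal ((n + 1) * Real.exp (4 * m * T - R)) := by
          rw [Finset.sum_const, ← ENNReal.ofReal_nsmul]
          simp
  rw [← lintegral_add_compl _ hmeas, ENNReal.ofReal_add (by positivity) (by positivity)]
  refine add_le_add (hS.setLIntegral_prod_le_pow hv hL x hw₀ hw₁ hρ hR n) (le_trans ?_ hcompl)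
  refine (setLIntegral_mono measurable_const fun ω _ => ?_).trans_eq (setLIntegral_one _)
  exact ENNReal.ofReal_le_one.2 (Finset.prod_le_one (fun i _ => hw₀ _) fun i _ => hw₁ _)

end IsCTSRW

/-! ### Exponential moments of the occupation integral -/

lemma exp_neg_setAverage_le {α : Type*} [MeasurableSpace α] {ν : Measure α} {g : α → ℝ} {s : Set α}
    (hs₀ : ν s ≠ 0) (hs : ν s ≠ ⊤) (hg₀ : ∀ v, 0 ≤ g v) (hg : IntegrableOn g s ν) :
    Real.exp (-⨍ v in s, g v ∂ν) ≤ ⨍ v in s, Real.exp (-g v) ∂ν := by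
  have hexp : IntegrableOn (fun v => Real.exp (-g v)) s ν := by
    have : IsFiniteMeasure (ν.restrict s) := isFiniteMeasure_restrict.2 hs
    refine Integrable.of_bound
      (Real.continuous_exp.comp_aestronglyMeasurable hg.neg.aestronglyMeasurable) 1
      (ae_of_all _ fun v => ?_)
    simpa using hg₀ v
  have h := convexOn_exp.map_set_average_le Real.continuous_exp.continuousOn isClosed_univ hs₀ hs
    (ae_of_all _ fun _ => mem_univ _) hg.neg hexp
  rwa [setAverage_eq, show ∫ v in s, (-g) v ∂ν = -∫ v in s, g v ∂ν from integral_neg _, smul_neg,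
    ← setAverage_eq] at h

section Blocks

variable {g : ℝ → ℝ} {L : ℝ} {n : ℕ}

lemma integrableOn_comp_add_mul (hL : 0 ≤ L) (hg : IntegrableOn g (Ioc 0 (n * L))) (i : Fin n) :
    IntegrableOn (fun v => g (v + i * L)) (Ioc 0 L) := by
  have hi : (i + 1 : ℝ) ≤ n := by exact_mod_cast i.is_lt
  have himage : (fun v => v + i * L) '' Ioc 0 L ⊆ Ioc 0 (n * L) := by
    rw [image_add_const_Ioc]
    exact Ioc_subset_Ioc (by positivity) (by nlinarith)
  exact ((measurePreserving_add_right volume (i * L)).integrableOn_image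
    (measurableEmbedding_addRight _)).1 (hg.mono_set himage)

lemma setIntegral_sum_comp_add_mul (hL : 0 ≤ L) (hg : IntegrableOn g (Ioc 0 (n * L))) :
    ∫ v in Ioc 0 L, ∑ i : Fin n, g (v + i * L) = ∫ u in Ioc 0 (n * L), g u := by
  have hint (i : ℕ) (hi : i < n) : IntervalIntegrable g volume (i * L) ((i + 1 : ℕ) * L) := by
    have hi' : ((i + 1 : ℕ) : ℝ) ≤ n := by exact_mod_cast hi
    rw [intervalIntegrable_iff_integrableOn_Ioc_of_le (by push_cast; nlinarith)]
    exact hg.mono_set (Ioc_subset_Ioc (by positivity) (by gcongr))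
  have hblock (i : ℕ) : ∫ v in Ioc 0 L, g (v + i * L) = ∫ u in (i * L)..((i + 1 : ℕ) * L), g u := by
    rw [← intervalIntegral.integral_of_le hL, intervalIntegral.integral_comp_add_right]
    push_cast
    ring_nf
  rw [integral_finsetSum _ fun i _ => integrableOn_comp_add_mul hL hg i,
    Fin.sum_univ_eq_sum_range fun i => ∫ v in Ioc 0 L, g (v + i * L)]
  simp only [hblock]
  rw [intervalIntegral.sum_integral_adjacent_intervals hint,
    intervalIntegral.integral_of_le (by push_cast; nlinarith [n.cast_nonneg (α := ℝ)])]
  simp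

lemma ofReal_exp_neg_setIntegral_le (hL : 0 < L) {l : ℝ} (hl : 0 ≤ l) (hg₀ : ∀ u, 0 ≤ g u)
    (hg : IntegrableOn g (Ioc 0 (n * L))) :
    ENNReal.ofReal (Real.exp (-(l / L * ∫ u in Ioc 0 (n * L), g u))) ≤
      ENNReal.ofReal L⁻¹ *
        ∫⁻ v in Ioc 0 L, ENNReal.ofReal (∏ i : Fin n, Real.exp (-(l * g (v + i * L)))) := by
  have hsum₀ (v : ℝ) : 0 ≤ l * ∑ i : Fin n, g (v + i * L) :=
    mul_nonneg hl (Finset.sum_nonneg fun i _ => hg₀ _)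
  have hsum : IntegrableOn (fun v => l * ∑ i : Fin n, g (v + i * L)) (Ioc 0 L) :=
    (integrable_finsetSum _ fun i _ => integrableOn_comp_add_mul hL.le hg i).const_mul l
  have h := exp_neg_setAverage_le (by simpa using hL) (by simp) hsum₀ hsum
  simp only [setAverage_eq, Real.volume_real_Ioc_of_le hL.le, sub_zero, smul_eq_mul,
    integral_const_mul, setIntegral_sum_comp_add_mul hL.le hg] at h
  calc ENNReal.ofReal (Real.exp (-(l / L * ∫ u in Ioc 0 (n * L), g u)))
      ≤ ENNReal.ofReal (L⁻¹ * ∫ v in Ioc 0 L, Real.exp (-(l * ∑ i : Fin n, g (v + i * L)))) := by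
        refine ENNReal.ofReal_le_ofReal (le_of_eq_of_le ?_ h)
        ring_nf
    _ ≤ ENNReal.ofReal L⁻¹ *
          ∫⁻ v in Ioc 0 L, ENNReal.ofReal (Real.exp (-(l * ∑ i : Fin n, g (v + i * L)))) := by
        rw [ENNReal.ofReal_mul (by positivity)]
        gcongr
        have h := enorm_integral_le_lintegral_enorm (μ := volume.restrict (Ioc 0 L))
          fun v => Real.exp (-(l * ∑ i : Fin n, g (v + i * L)))
        rw [Real.enorm_of_nonneg (integral_nonneg fun v => (Real.exp_pos _).le)] at h
        simpa only [Real.enorm_of_nonneg (Real.exp_pos _).le] using h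
    _ = _ := by simp only [Finset.mul_sum, ← Finset.sum_neg_distrib, Real.exp_sum]

end Blocks

lemma ae_integrable_comp {Ω β V : Type*} [MeasurableSpace Ω] [MeasurableSpace β]
    [MeasurableSpace V] [Countable V] [MeasurableSingletonClass V] {μ : Measure Ω} [SFinite μ]
    {z : V → Ω → ℝ} (hz : ∀ x, Measurable (z x)) {o : V}
    (hident : ∀ x, IdentDistrib (z x) (z o) μ μ) (hint : Integrable (z o) μ) {κ : Measure β}
    [IsFiniteMeasure κ] {X : β → V} (hX : Measurable X) :
    ∀ᵐ ζ ∂μ, Integrable (fun b => z (X b) ζ) κ := by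
  have hmeas : Measurable fun p : Ω × β => z (X p.2) p.1 :=
    (measurable_from_prod_countable_left (f := fun p : Ω × V => z p.2 p.1) hz).comp
      (measurable_fst.prodMk (hX.comp measurable_snd))
  have hprod : Integrable (fun p : Ω × β => z (X p.2) p.1) (μ.prod κ) := by
    refine (integrable_prod_iff' hmeas.aestronglyMeasurable).2
      ⟨ae_of_all _ fun b => (hident (X b)).integrable_iff.2 hint, ?_⟩
    have hnorm (b : β) : ∫ ζ, ‖z (X b) ζ‖ ∂μ = ∫ ζ, ‖z o ζ‖ ∂μ :=
      ((hident (X b)).comp measurable_norm).integral_eq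
    simp only [hnorm]
    exact integrable_const _
  exact hprod.prod_right_ae

namespace IsCTSRW

variable {m : ℕ} {Ω : Type*} [MeasurableSpace Ω] {P : (Fin m → ℤ) → Measure Ω}
  {S : ℝ → Ω → Fin m → ℤ}

lemma ae_integrableOn_comp {Ωz : Type*} [MeasurableSpace Ωz] {μ : Measure Ωz} [SFinite μ]
    {z : (Fin m → ℤ) → Ωz → ℝ} (hz : ∀ x, Measurable (z x)) {o : Fin m → ℤ}
    (hident : ∀ x, IdentDistrib (z x) (z o) μ μ) (hint : Integrable (z o) μ)
    (hS : IsCTSRW m P S) (x : Fin m → ℤ) :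
    ∀ᵐ ζ ∂μ, ∀ᵐ ω ∂P x, ∀ T : ℝ, IntegrableOn (fun u => z (S u ω) ζ) (Ioc 0 T) := by
  have := hS.prob x
  have hprod : ∀ᵐ ζ ∂μ, ∀ N : ℕ, Integrable (fun p : Ω × ℝ => z (S p.2 p.1) ζ)
      ((P x).prod (volume.restrict (Ioc 0 N))) :=
    ae_all_iff.2 fun N => ae_integrable_comp hz hident hint (hS.meas.comp measurable_swap)
  filter_upwards [hprod] with ζ hζ
  filter_upwards [ae_all_iff.2 fun N => (hζ N).prod_right_ae] with ω hω T
  exact IntegrableOn.mono_set (hω ⌈T⌉₊) (Ioc_subset_Ioc_right (Nat.le_ceil T))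

lemma measurable_prod_comp (hS : IsCTSRW m P S) (L : ℝ) (w : (Fin m → ℤ) → ℝ) (n : ℕ) :
    Measurable fun p : Ω × ℝ => ENNReal.ofReal (∏ i : Fin n, w (S (p.2 + i * L) p.1)) := by
  refine ENNReal.measurable_ofReal.comp (Finset.measurable_fun_prod _ fun i _ => ?_)
  exact (measurable_of_countable w).comp
    (hS.meas.comp ((measurable_snd.add_const _).prodMk measurable_fst))

lemma lintegral_setLIntegral_prod_le (hS : IsCTSRW m P S) {L : ℝ} (hL : 0 < L) (x : Fin m → ℤ)
    {w : (Fin m → ℤ) → ℝ} (hw₀ : ∀ y, 0 ≤ w y) (hw₁ : ∀ y, w y ≤ 1) {R : ℕ} {ρ : ℝ} (hρ : 0 ≤ ρ)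
    (hR : ∀ y ∈ latticeBox x R, ∑ y' ∈ latticeBox x R, heatKernel m L y y' * w y' ≤ ρ) (n : ℕ) :
    ∫⁻ ω, (ENNReal.ofReal L⁻¹ *
      ∫⁻ v in Ioc 0 L, ENNReal.ofReal (∏ i : Fin (n + 1), w (S (v + i * L) ω))) ∂P x ≤
        ENNReal.ofReal (ρ ^ n + (n + 1) * Real.exp (4 * m * ((n + 1 : ℕ) * L) - R)) := by
  have := hS.prob x
  have hmeas := hS.measurable_prod_comp L w (n + 1)
  rw [lintegral_const_mul _ hmeas.lintegral_prod_right',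
    lintegral_lintegral_swap hmeas.aemeasurable]
  set B : ENNReal :=
    ENNReal.ofReal (ρ ^ n + (n + 1) * Real.exp (4 * m * ((n + 1 : ℕ) * L) - R))
  calc ENNReal.ofReal L⁻¹ *
        ∫⁻ v in Ioc 0 L, ∫⁻ ω, ENNReal.ofReal (∏ i : Fin (n + 1), w (S (v + i * L) ω)) ∂P x
      ≤ ENNReal.ofReal L⁻¹ * ∫⁻ _ in Ioc 0 L, B := by
        gcongr ENNReal.ofReal L⁻¹ * ?_
        refine setLIntegral_mono measurable_const fun v hv => ?_
        refine hS.lintegral_prod_le hv.1.le hL.le ?_ x hw₀ hw₁ hρ hR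
        push_cast
        linarith [hv.2]
    _ = B := by
        rw [setLIntegral_const, Real.volume_Ioc, sub_zero, mul_left_comm,
          ← ENNReal.ofReal_mul (by positivity), inv_mul_cancel₀ hL.ne', ENNReal.ofReal_one, mul_one]

lemma measure_setIntegral_le (hS : IsCTSRW m P S) {L : ℝ} (hL : 0 < L) (x : Fin m → ℤ)
    {f : (Fin m → ℤ) → ℝ} (hf : ∀ y, 0 ≤ f y) {n : ℕ}
    (hint : ∀ᵐ ω ∂P x, IntegrableOn (fun u => f (S u ω)) (Ioc 0 ((n + 1 : ℕ) * L)))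
    {l : ℝ} (hl : 0 ≤ l) {R : ℕ} {ρ : ℝ} (hρ : 0 ≤ ρ)
    (hR : ∀ y ∈ latticeBox x R,
      ∑ y' ∈ latticeBox x R, heatKernel m L y y' * Real.exp (-(l * f y')) ≤ ρ) (a : ℝ) :
    P x {ω | ∫ u in Ioc 0 ((n + 1 : ℕ) * L), f (S u ω) ≤ a} ≤ ENNReal.ofReal
      (Real.exp (l / L * a) *
        (ρ ^ n + (n + 1) * Real.exp (4 * m * ((n + 1 : ℕ) * L) - R))) := by
  set w : (Fin m → ℤ) → ℝ := fun y => Real.exp (-(l * f y)) with hw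
  have hw₁ (y : Fin m → ℤ) : w y ≤ 1 := by simpa [hw] using mul_nonneg hl (hf y)
  set Z : Ω → ENNReal := fun ω => ENNReal.ofReal L⁻¹ *
    ∫⁻ v in Ioc 0 L, ENNReal.ofReal (∏ i : Fin (n + 1), w (S (v + i * L) ω))
  have hZmeas : Measurable Z :=
    (hS.measurable_prod_comp L w (n + 1)).lintegral_prod_right'.const_mul _
  calc P x {ω | ∫ u in Ioc 0 ((n + 1 : ℕ) * L), f (S u ω) ≤ a}
      ≤ P x {ω | ENNReal.ofReal (Real.exp (-(l / L * a))) ≤ Z ω} := by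
        refine measure_mono_ae ?_
        filter_upwards [hint] with ω hω (hle : ∫ u in Ioc 0 ((n + 1 : ℕ) * L), f (S u ω) ≤ a)
        have hjensen := ofReal_exp_neg_setIntegral_le hL hl (fun u => hf (S u ω)) hω
        exact le_trans (by gcongr) hjensen
    _ ≤ (∫⁻ ω, Z ω ∂P x) / ENNReal.ofReal (Real.exp (-(l / L * a))) :=
        meas_ge_le_lintegral_div hZmeas.aemeasurable (by simp [Real.exp_pos])
          ENNReal.ofReal_ne_top
    _ ≤ _ := by
        grw [hS.lintegral_setLIntegral_prod_le hL x (fun y => (Real.exp_pos _).le) hw₁ hρ hR n,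
          ← ENNReal.ofReal_div_of_pos (Real.exp_pos _), Real.exp_neg, div_inv_eq_mul, mul_comm]

end IsCTSRW

/-! ### Concentration of the scenery -/

lemma tendsto_integral_one_sub_exp_neg_div {Ω : Type*} [MeasurableSpace Ω] {μ : Measure Ω}
    {X : Ω → ℝ} (hX₀ : ∀ ω, 0 ≤ X ω) (hX : Integrable X μ) :
    Tendsto (fun l => ∫ ω, (1 - Real.exp (-(l * X ω))) / l ∂μ) (nhdsWithin 0 (Ioi 0))
      (nhds (∫ ω, X ω ∂μ)) := by
  have hderiv (x : ℝ) : HasDerivAt (fun l => 1 - Real.exp (-(l * x))) x 0 := by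
    simpa using ((((hasDerivAt_id (0 : ℝ)).mul_const x).neg.exp).const_sub 1)
  refine tendsto_integral_filter_of_dominated_convergence X ?_ ?_ hX (ae_of_all _ fun ω => ?_)
  · refine .of_forall fun l => ((aestronglyMeasurable_const.sub ?_).div₀ aestronglyMeasurable_const)
    exact Real.continuous_exp.comp_aestronglyMeasurable (hX.aestronglyMeasurable.const_mul l).neg
  · filter_upwards [self_mem_nhdsWithin] with l (hl : 0 < l)
    refine ae_of_all _ fun ω => ?_
    have hexp : Real.exp (-(l * X ω)) ≤ 1 := by simpa using mul_nonneg hl.le (hX₀ ω)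
    rw [Real.norm_of_nonneg (div_nonneg (by linarith) hl.le), div_le_iff₀ hl]
    linarith [Real.add_one_le_exp (-(l * X ω))]
  · have h := (hasDerivAt_iff_tendsto_slope.1 (hderiv (X ω))).mono_left
      (nhdsWithin_mono 0 fun l (hl : 0 < l) => hl.ne')
    refine h.congr fun l => ?_
    simp [slope_def_field]

lemma exists_integral_exp_neg_mul_lt {Ω : Type*} [MeasurableSpace Ω] {μ : Measure Ω}
    [IsProbabilityMeasure μ] {X : Ω → ℝ} (hX₀ : ∀ ω, 0 ≤ X ω) (hX : Integrable X μ) {b : ℝ}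
    (hb : b < ∫ ω, X ω ∂μ) :
    ∃ l > 0, ∫ ω, Real.exp (-(l * X ω)) ∂μ < Real.exp (-(l * b)) := by
  obtain ⟨l, hbl, hl : 0 < l⟩ := (((tendsto_integral_one_sub_exp_neg_div hX₀ hX).eventually
    (lt_mem_nhds hb)).and self_mem_nhdsWithin).exists
  have hexp : Integrable (fun ω => Real.exp (-(l * X ω))) μ := by
    refine .of_bound (Real.continuous_exp.comp_aestronglyMeasurable
      (hX.aestronglyMeasurable.const_mul l).neg) 1 (ae_of_all _ fun ω => ?_)
    simpa using mul_nonneg hl.le (hX₀ ω)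
  rw [integral_div, integral_sub (integrable_const 1) hexp, lt_div_iff₀ hl] at hbl
  simp only [integral_const, probReal_univ, smul_eq_mul, mul_one] at hbl
  exact ⟨l, hl, by linarith [Real.add_one_le_exp (-(l * b))]⟩

lemma measure_sum_mul_sub_integral_ge_le {Ω ι : Type*} [MeasurableSpace Ω] {μ : Measure Ω}
    [IsProbabilityMeasure μ] {X : ι → Ω → ℝ} (hmeas : ∀ i, Measurable (X i))
    (hindep : iIndepFun X μ) (hX : ∀ i ω, X i ω ∈ Icc (0 : ℝ) 1) {s : Finset ι} {p : ι → ℝ}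
    (hp₀ : ∀ i ∈ s, 0 ≤ p i) (hp : ∑ i ∈ s, p i ≤ 1) {c : ℝ} (hc₀ : 0 ≤ c)
    (hc : ∀ i ∈ s, c * p i ≤ 1) {δ : ℝ} (hδ : 0 ≤ δ) :
    μ.real {ω | δ ≤ ∑ i ∈ s, p i * (X i ω - ∫ ω', X i ω' ∂μ)} ≤ Real.exp (-(2 * δ ^ 2 * c)) := by
  set Y : ι → Ω → ℝ := fun i ω => p i * (X i ω - ∫ ω', X i ω' ∂μ)
  have hY (i : ι) : HasSubgaussianMGF (Y i) (⟨p i ^ 2, sq_nonneg _⟩ * (‖(1 : ℝ) - 0‖₊ / 2) ^ 2) μ :=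
    (hasSubgaussianMGF_of_mem_Icc (hmeas i).aemeasurable (ae_of_all _ (hX i))).const_mul (p i)
  have hYindep : iIndepFun Y μ :=
    hindep.comp (fun i x => p i * (x - ∫ ω', X i ω' ∂μ)) fun i => by fun_prop
  have hsum := HasSubgaussianMGF.sum_of_iIndepFun hYindep (s := s) fun i _ => hY i
  set V : NNReal := ∑ i ∈ s, ⟨p i ^ 2, sq_nonneg _⟩ * (‖(1 : ℝ) - 0‖₊ / 2) ^ 2
  have hV : c * (4 * V) ≤ 1 :=
    calc c * (4 * V) = ∑ i ∈ s, c * p i * p i := by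
          simp only [V, NNReal.coe_sum, Finset.mul_sum]
          refine Finset.sum_congr rfl fun i _ => ?_
          change c * (4 * (p i ^ 2 * (‖(1 : ℝ) - 0‖ / 2) ^ 2)) = _
          norm_num
          ring
      _ ≤ ∑ i ∈ s, p i :=
          Finset.sum_le_sum fun i hi => mul_le_of_le_one_left (hp₀ i hi) (hc i hi)
      _ ≤ 1 := hp
  calc μ.real {ω | δ ≤ ∑ i ∈ s, Y i ω}
      ≤ Real.exp (-(4 * δ * c) * δ) * mgf (fun ω => ∑ i ∈ s, Y i ω) μ (4 * δ * c) :=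
        measure_ge_le_exp_mul_mgf δ (by positivity) (hsum.integrable_exp_mul _)
    _ ≤ Real.exp (-(4 * δ * c) * δ) * Real.exp (V * (4 * δ * c) ^ 2 / 2) := by
        gcongr
        exact hsum.mgf_le _
    _ ≤ Real.exp (-(2 * δ ^ 2 * c)) := by
        rw [← Real.exp_add, Real.exp_le_exp]
        nlinarith [mul_le_mul_of_nonneg_left hV (by positivity : 0 ≤ 2 * δ ^ 2 * c)]

lemma summable_mul_exp_neg_mul_sqrt (k d : ℕ) {κ : ℝ} (hκ : 0 < κ) :
    Summable fun N : ℕ => (2 * (N : ℝ) ^ k + 1) ^ d * Real.exp (-(κ * √N)) := by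
  have hdecay : (fun N : ℕ => Real.exp (-κ * √N)) =o[atTop]
      fun N : ℕ => √(N : ℝ) ^ (-(2 * (k * d + 2) : ℕ) : ℝ) :=
    (isLittleO_exp_neg_mul_rpow_atTop hκ _).comp_tendsto
      (Real.tendsto_sqrt_atTop.comp tendsto_natCast_atTop_atTop)
  have hpoly : (fun N : ℕ => (2 * (N : ℝ) ^ k + 1) ^ d) =O[atTop]
      fun N : ℕ => (N : ℝ) ^ (k * d) := by
    refine Asymptotics.IsBigO.of_bound (3 ^ d) ?_
    filter_upwards [eventually_ge_atTop 1] with N hN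
    have hN1 : (1 : ℝ) ≤ N := by exact_mod_cast hN
    rw [Real.norm_of_nonneg (by positivity), Real.norm_of_nonneg (by positivity), pow_mul,
      ← mul_pow]
    gcongr
    linarith [one_le_pow₀ hN1 (n := k)]
  refine summable_of_isBigO_nat (Real.summable_nat_pow_inv.2 one_lt_two)
    ((hpoly.mul hdecay.isBigO).congr' (.of_forall fun N => by simp only [neg_mul]) ?_)
  filter_upwards [eventually_ge_atTop 1] with N hN
  have hN0 : (0 : ℝ) < N := by exact_mod_cast hN
  rw [Real.rpow_neg (Real.sqrt_nonneg _), Real.rpow_natCast, pow_mul √(N : ℝ), Real.sq_sqrt hN0.le,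
    pow_add]
  field_simp

section Scenery

variable {d : ℕ} {Ω : Type*} [MeasurableSpace Ω] {μ : Measure Ω} [IsProbabilityMeasure μ]
  {X : (Fin d → ℤ) → Ω → ℝ} {q ρ : ℝ}

lemma measure_exists_lt_sum_heatKernel_mul_le (hd : 0 < d) (hmeas : ∀ y, Measurable (X y))
    (hindep : iIndepFun X μ) (hX : ∀ y ω, X y ω ∈ Icc (0 : ℝ) 1) (hq : ∀ y, ∫ ω, X y ω ∂μ ≤ q)
    (hqρ : q < ρ) {t : ℝ} (ht : 0 ≤ t) (x₀ : Fin d → ℤ) (R : ℕ) :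
    μ.real {ω | ∃ x ∈ latticeBox x₀ R,
      ρ < ∑ y ∈ latticeBox x₀ R, heatKernel d t x y * X y ω} ≤
        (2 * R + 1) ^ d * Real.exp (-(2 * (ρ - q) ^ 2 * √t)) := by
  have hq₀ : 0 ≤ q := (integral_nonneg fun ω => (hX 0 ω).1).trans (hq 0)
  have hsite (x : Fin d → ℤ) :
      μ.real {ω | ρ < ∑ y ∈ latticeBox x₀ R, heatKernel d t x y * X y ω} ≤
        Real.exp (-(2 * (ρ - q) ^ 2 * √t)) := by
    refine (measureReal_mono fun ω hω => ?_).trans (measure_sum_mul_sub_integral_ge_le hmeas hindep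
      hX (s := latticeBox x₀ R) (p := heatKernel d t x) (fun y _ => heatKernel_nonneg ht x y)
      (sum_heatKernel_le_one ht x _) (Real.sqrt_nonneg t)
      (fun y _ => sqrt_mul_heatKernel_le_one hd ht x y) (sub_nonneg.2 hqρ.le))
    have hmean : ∑ y ∈ latticeBox x₀ R, heatKernel d t x y * ∫ ω, X y ω ∂μ ≤ q :=
      calc ∑ y ∈ latticeBox x₀ R, heatKernel d t x y * ∫ ω, X y ω ∂μ
          ≤ ∑ y ∈ latticeBox x₀ R, heatKernel d t x y * q := Finset.sum_le_sum fun y _ =>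
            mul_le_mul_of_nonneg_left (hq y) (heatKernel_nonneg ht x y)
        _ ≤ q := by
            rw [← Finset.sum_mul]
            exact mul_le_of_le_one_left hq₀ (sum_heatKernel_le_one ht x _)
    rw [mem_ofPred_eq] at hω ⊢
    simp only [mul_sub, Finset.sum_sub_distrib]
    linarith
  have hunion : {ω | ∃ x ∈ latticeBox x₀ R,
      ρ < ∑ y ∈ latticeBox x₀ R, heatKernel d t x y * X y ω} =
        ⋃ x ∈ latticeBox x₀ R, {ω | ρ < ∑ y ∈ latticeBox x₀ R, heatKernel d t x y * X y ω} := by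
    ext ω
    simp
  rw [hunion]
  refine (measureReal_biUnion_finset_le _ _).trans ((Finset.sum_le_card_nsmul _ _ _
    fun x _ => hsite x).trans_eq ?_)
  rw [card_latticeBox, nsmul_eq_mul]
  push_cast
  rfl

lemma ae_eventually_sum_heatKernel_mul_le (hd : 0 < d) (hmeas : ∀ y, Measurable (X y))
    (hindep : iIndepFun X μ) (hX : ∀ y ω, X y ω ∈ Icc (0 : ℝ) 1) (hq : ∀ y, ∫ ω, X y ω ∂μ ≤ q)
    (hqρ : q < ρ) (x₀ : Fin d → ℤ) (k : ℕ) :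
    ∀ᵐ ω ∂μ, ∀ᶠ N : ℕ in atTop, ∀ x ∈ latticeBox x₀ (N ^ k),
      ∑ y ∈ latticeBox x₀ (N ^ k), heatKernel d N x y * X y ω ≤ ρ := by
  set bad : ℕ → Set Ω := fun N => {ω | ∃ x ∈ latticeBox x₀ (N ^ k),
    ρ < ∑ y ∈ latticeBox x₀ (N ^ k), heatKernel d N x y * X y ω} with hbad
  have hsum : Summable fun N => μ.real (bad N) := by
    refine Summable.of_nonneg_of_le (fun N => measureReal_nonneg) (fun N => ?_)
      (summable_mul_exp_neg_mul_sqrt k d (κ := 2 * (ρ - q) ^ 2)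
        (by have := sub_pos.2 hqρ; positivity))
    simpa using measure_exists_lt_sum_heatKernel_mul_le hd hmeas hindep hX hq hqρ N.cast_nonneg x₀
      (N ^ k)
  have hfin : ∑' N, μ (bad N) ≠ ⊤ := by
    simpa only [measureReal_def, ENNReal.ofReal_toReal (measure_ne_top μ _)] using
      hsum.tsum_ofReal_ne_top
  filter_upwards [ae_eventually_notMem hfin] with ω hω
  filter_upwards [hω] with N hN
  simpa [hbad] using hN

end Scenery

/-! ### Choice of scales -/

lemma isLittleO_rpow_rpow_atTop {c p : ℝ} (hcp : c < p) :
    (fun t : ℝ => t ^ c) =o[atTop] fun t => t ^ p := by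
  refine (Asymptotics.isLittleO_iff_tendsto' ?_).2
    ((tendsto_rpow_neg_atTop (sub_pos.2 hcp)).congr' ?_)
  · filter_upwards [eventually_gt_atTop 0] with t ht h
    exact absurd h (Real.rpow_pos_of_pos ht p).ne'
  · filter_upwards [eventually_gt_atTop 0] with t ht
    rw [← Real.rpow_sub ht, neg_sub]

lemma eventually_exp_sub_mul_rpow_le {f : ℝ → ℝ} {c p κ : ℝ} (hc : 0 < c) (hcp : c < p)
    (hκ : 0 < κ) (hf : f =o[atTop] fun t : ℝ => t ^ p) :
    ∀ᶠ t in atTop, Real.exp (f t - κ * t ^ p) ≤ Real.exp (-t ^ c) / 2 := by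
  have hconst : (fun _ => Real.log 2) =o[atTop] fun t : ℝ => t ^ p :=
    Asymptotics.isLittleO_const_left.2
      (.inr (tendsto_norm_atTop_atTop.comp (tendsto_rpow_atTop (hc.trans hcp))))
  filter_upwards [((hf.add (isLittleO_rpow_rpow_atTop hcp)).add hconst).bound hκ,
    eventually_ge_atTop 0] with t hbound ht
  rw [Real.norm_of_nonneg (Real.rpow_nonneg ht p)] at hbound
  rw [← Real.exp_log (two_pos : (0 : ℝ) < 2), ← Real.exp_sub, Real.exp_le_exp]
  linarith [Real.le_norm_self (f t + t ^ c + Real.log 2)]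

lemma eventually_exp_add_exp_ceil_rpow_le {c s κ : ℝ} (hc : 0 < c) (hs : 0 < s) (hcs : c + s < 1)
    (hκ : 0 < κ) {k : ℕ} (hk : 2 ≤ s * k) (A B : ℝ) :
    ∀ᶠ t : ℝ in atTop, Real.exp (A - κ * (t / ⌈t ^ s⌉₊)) + Real.exp (B * t - (⌈t ^ s⌉₊ ^ k : ℕ)) ≤
      Real.exp (-t ^ c) := by
  have hA : (fun _ => A) =o[atTop] fun t : ℝ => t ^ (1 - s) :=
    Asymptotics.isLittleO_const_left.2
      (.inr (tendsto_norm_atTop_atTop.comp (tendsto_rpow_atTop (by linarith))))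
  have hB : (fun t => B * t) =o[atTop] fun t : ℝ => t ^ (2 : ℝ) := by
    simpa using (isLittleO_rpow_rpow_atTop one_lt_two).const_mul_left B
  filter_upwards [eventually_exp_sub_mul_rpow_le hc (lt_sub_right_of_add_lt hcs) (half_pos hκ) hA,
    eventually_exp_sub_mul_rpow_le hc (by linarith) one_pos hB, eventually_ge_atTop 1]
    with t hfst hsnd ht
  have ht₀ : 0 < t := by linarith
  have hs₁ : 1 ≤ t ^ s := Real.one_le_rpow ht hs.le
  have hblocks : t ^ (1 - s) / 2 ≤ t / ⌈t ^ s⌉₊ :=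
    calc t ^ (1 - s) / 2 = t / (2 * t ^ s) := by
          rw [Real.rpow_sub ht₀, Real.rpow_one, div_div, mul_comm]
      _ ≤ t / ⌈t ^ s⌉₊ := by
          have hceil : 0 < (⌈t ^ s⌉₊ : ℝ) := zero_lt_one.trans_le (hs₁.trans (Nat.le_ceil _))
          exact div_le_div_of_nonneg_left ht₀.le hceil (Nat.ceil_le_two_mul (by linarith))
  have hbox : t ^ (2 : ℝ) ≤ (⌈t ^ s⌉₊ ^ k : ℕ) :=
    calc t ^ (2 : ℝ) ≤ t ^ (s * k) := Real.rpow_le_rpow_of_exponent_le ht hk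
      _ = (t ^ s) ^ k := by rw [Real.rpow_mul ht₀.le, Real.rpow_natCast]
      _ ≤ (⌈t ^ s⌉₊ ^ k : ℕ) := by
          push_cast
          gcongr
          exact Nat.le_ceil _
  calc Real.exp (A - κ * (t / ⌈t ^ s⌉₊)) + Real.exp (B * t - (⌈t ^ s⌉₊ ^ k : ℕ))
      ≤ Real.exp (A - κ / 2 * t ^ (1 - s)) + Real.exp (B * t - 1 * t ^ (2 : ℝ)) := by
        rw [div_mul_comm, mul_comm _ κ, one_mul]
        gcongr
    _ ≤ Real.exp (-t ^ c) := by linarith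

lemma eventually_ceil_rpow_le {s : ℝ} (hs : s < 1) : ∀ᶠ t : ℝ in atTop, (⌈t ^ s⌉₊ : ℝ) ≤ t := by
  filter_upwards [(isLittleO_rpow_rpow_atTop hs).bound (half_pos one_pos), eventually_ge_atTop 2]
    with t hbound ht
  have hpow : 0 ≤ t ^ s := Real.rpow_nonneg (by linarith) s
  rw [Real.rpow_one, Real.norm_of_nonneg hpow, Real.norm_of_nonneg (by linarith)] at hbound
  linarith [Nat.ceil_lt_add_one hpow]

lemma exp_mul_exp_neg_pow_le {l r b b' : ℝ} {n : ℕ} (hl : 0 ≤ l) (hnr : n ≤ r) (hrn : r ≤ n + 2) :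
    Real.exp (l * r * b) * Real.exp (-(l * b')) ^ n ≤
      Real.exp (2 * l * |b'| - l * (b' - b) * r) := by
  have hround : (r - n) * b' ≤ 2 * |b'| :=
    (mul_le_mul_of_nonneg_left (le_abs_self b') (sub_nonneg.2 hnr)).trans (by gcongr; linarith)
  rw [← Real.exp_nat_mul, ← Real.exp_add, Real.exp_le_exp]
  linear_combination l * hround

lemma IsCTSRW.measure_setIntegral_le_mul {m : ℕ} {Ω : Type*} [MeasurableSpace Ω]
    {P : (Fin m → ℤ) → Measure Ω} {S : ℝ → Ω → Fin m → ℤ} (hS : IsCTSRW m P S) {L t : ℝ}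
    (hL : 1 ≤ L) (hLt : L ≤ t) (x : Fin m → ℤ) {f : (Fin m → ℤ) → ℝ} (hf : ∀ y, 0 ≤ f y)
    (hint : ∀ᵐ ω ∂P x, IntegrableOn (fun u => f (S u ω)) (Ioc 0 t)) {l : ℝ} (hl : 0 ≤ l) {R : ℕ}
    {b' : ℝ} (hR : ∀ y ∈ latticeBox x R,
      ∑ y' ∈ latticeBox x R, heatKernel m L y y' * Real.exp (-(l * f y')) ≤ Real.exp (-(l * b')))
    (b : ℝ) :
    P x {ω | ∫ u in Ioc 0 t, f (S u ω) ≤ t * b} ≤ ENNReal.ofReal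
      (Real.exp (2 * l * |b'| - l * (b' - b) * (t / L)) +
        Real.exp ((l * |b| + 1 + 4 * m) * t - R)) := by
  have hL₀ : 0 < L := by linarith
  have ht : 0 ≤ t := hL₀.le.trans hLt
  obtain ⟨n, hn⟩ : ∃ n : ℕ, ⌊t / L⌋₊ = n + 1 :=
    Nat.exists_eq_add_one.2 (Nat.floor_pos.2 ((one_le_div hL₀).2 hLt))
  have hle : ((n + 1 : ℕ) : ℝ) ≤ t / L := hn ▸ Nat.floor_le (by positivity)
  have hlt : t / L < (n + 1 : ℕ) + 1 := hn ▸ Nat.lt_floor_add_one _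
  have hmul : ((n + 1 : ℕ) : ℝ) * L ≤ t := (le_div_iff₀ hL₀).1 hle
  have hsub : Ioc 0 ((n + 1 : ℕ) * L) ⊆ Ioc 0 t := Ioc_subset_Ioc_right hmul
  have hdiv : t / L ≤ t := div_le_self ht hL
  have hnexp : (n + 1 : ℝ) ≤ Real.exp t := by
    push_cast at hle
    linarith [Real.add_one_le_exp t]
  have hlb : l * (t / L) * b ≤ l * |b| * t :=
    calc l * (t / L) * b ≤ l * (t / L) * |b| := by gcongr; exact le_abs_self b
      _ ≤ l * t * |b| := by gcongr
      _ = l * |b| * t := by ring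
  calc P x {ω | ∫ u in Ioc 0 t, f (S u ω) ≤ t * b}
      ≤ P x {ω | ∫ u in Ioc 0 ((n + 1 : ℕ) * L), f (S u ω) ≤ t * b} := by
        refine measure_mono_ae ?_
        filter_upwards [hint] with ω hω (hle : ∫ u in Ioc 0 t, f (S u ω) ≤ t * b)
        exact (setIntegral_mono_set hω (ae_of_all _ fun u => hf _) hsub.eventuallyLE).trans hle
    _ ≤ _ := hS.measure_setIntegral_le hL₀ x hf (hint.mono fun ω h => h.mono_set hsub) hl
        (Real.exp_pos _).le hR _
    _ ≤ _ := by
        rw [show l / L * (t * b) = l * (t / L) * b by ring, mul_add]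
        push_cast at hle hlt
        gcongr ENNReal.ofReal (?_ + ?_)
        · exact exp_mul_exp_neg_pow_le hl (by linarith) (by linarith)
        · grw [hnexp, hmul, ← Real.exp_add, ← Real.exp_add, hlb]
          exact Real.exp_le_exp.2 (by linarith)

theorem stmt4_general {d : ℕ} (hd : 0 < d) {Ωz Ωw : Type*} [MeasurableSpace Ωz]
    [MeasurableSpace Ωw] {μ : Measure Ωz} [IsProbabilityMeasure μ] {z : (Fin d → ℤ) → Ωz → ℝ}
    (hmeas : ∀ x, Measurable (z x)) (hnonneg : ∀ x ζ, 0 ≤ z x ζ) (hindep : iIndepFun z μ)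
    (hident : ∀ x, IdentDistrib (z x) (z 0) μ μ) (hint : Integrable (z 0) μ)
    {P : (Fin d → ℤ) → Measure Ωw} {S : ℝ → Ωw → Fin d → ℤ} (hS : IsCTSRW d P S)
    (x : Fin d → ℤ) {b c : ℝ} (hb : b < ∫ ζ, z 0 ζ ∂μ) (hc₀ : 0 < c) (hc₁ : c < 1) :
    ∀ᵐ ζ ∂μ, ∀ᶠ t in (atTop : Filter ℝ),
      (P x {ω | rwrs d z S t ζ ω ≤ t * b}).toReal ≤ Real.exp (-t ^ c) := by
  obtain ⟨b', hbb', hb'⟩ := exists_between hb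
  obtain ⟨l, hl, hlaplace⟩ := exists_integral_exp_neg_mul_lt (hnonneg 0) hint hb'
  obtain ⟨s, hs, hcs⟩ : ∃ s, 0 < s ∧ c + s < 1 := ⟨(1 - c) / 2, by linarith, by linarith⟩
  obtain ⟨k, hk⟩ := exists_nat_ge (2 / s)
  have hexp : Measurable fun r => Real.exp (-(l * r)) := by fun_prop
  have hgood := ae_eventually_sum_heatKernel_mul_le hd (fun y => hexp.comp (hmeas y))
    (hindep.comp (fun _ r => Real.exp (-(l * r))) fun _ => hexp)
    (fun y ζ => ⟨(Real.exp_pos _).le, by simpa using mul_nonneg hl.le (hnonneg y ζ)⟩)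
    (fun y => ((hident y).comp hexp).integral_eq.le) hlaplace x k
  filter_upwards [hgood, hS.ae_integrableOn_comp hmeas hident hint x] with ζ hζ hζint
  filter_upwards [(tendsto_nat_ceil_atTop.comp (tendsto_rpow_atTop hs)).eventually hζ,
    eventually_exp_add_exp_ceil_rpow_le hc₀ hs hcs (mul_pos hl (sub_pos.2 hbb'))
      ((div_le_iff₀' hs).1 hk) (2 * l * |b'|) (l * |b| + 1 + 4 * d),
    eventually_ceil_rpow_le (show s < 1 by linarith), eventually_ge_atTop 1]
    with t hbox hrate hceil ht
  refine (ENNReal.toReal_le_of_le_ofReal (by positivity) (hS.measure_setIntegral_le_mul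
    ?_ hceil x (hnonneg · ζ) (hζint.mono fun ω h => h t) hl.le hbox b)).trans hrate
  exact (Real.one_le_rpow ht hs.le).trans (Nat.le_ceil _)

/-- Proposition (lower deviation below the mean, integrable case): for `d ≥ 1`, `α > 0`,
`𝔼[z(0)] < ∞` and every `ε ∈ (0, 𝔼[z(0)])` there is `c(ε) > 0` such that ℙ-a.s.,
`P₀(A(t) ≤ t(𝔼[z(0)] − ε)) ≤ exp(-t^{c(ε)})` for all sufficiently large `t`. -/
theorem stmt4 (d : ℕ) (hd : 1 ≤ d) (α : ℝ) (hα : 0 < α)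
    {Ωz Ωw : Type*} [MeasurableSpace Ωz] [MeasurableSpace Ωw]
    (μ : Measure Ωz) (z : (Fin d → ℤ) → Ωz → ℝ) (hz : IsScenery d α μ z)
    (hint : Integrable (z 0) μ)
    (P : (Fin d → ℤ) → Measure Ωw) (S : ℝ → Ωw → (Fin d → ℤ)) (hS : IsCTSRW d P S) :
    ∀ ε : ℝ, 0 < ε → ε < (∫ ζ, z 0 ζ ∂ μ) → ∃ c > (0 : ℝ),
      ∀ᵐ ζ ∂ μ, ∀ᶠ t in (atTop : Filter ℝ),
        ((P 0) {ω | rwrs d z S t ζ ω ≤ t * ((∫ ζ', z 0 ζ' ∂ μ) - ε)}).toReal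
          ≤ Real.exp (-(t ^ c)) := by
  have := hz.prob
  exact fun ε hε _ => ⟨1 / 2, one_half_pos, stmt4_general hd hz.meas hz.nonneg hz.indep hz.ident
    hint hS 0 (sub_lt_self _ hε) one_half_pos one_half_lt_one⟩
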